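/- Let N be a positive integer, R ≤ N, let κ' = diag(κ'_1,…,κ'_R) and κ'' = diag(κ''_{R+1},…,κ''_N) be diagonal real matrices with strictly positive entries, and set κ = diag(κ',κ''). Let C and D be real N×N matrices, partitioned into blocks C = [[C₁₁,C₁₂],[C₂₁,C₂₂]], D = [[D₁₁,D₁₂],[D₂₁,D₂₂]] with C₁₁ of size R×R. Assume: (i) M := C₁₁ is invertible and C₂₂ = C₂₁M⁻¹C₁₂ (so that C has rank R); (ii) setting Q₀ := C₂₁M⁻¹, for every i ≤ R and j > R, either (Q₀)_{ji} = 0 or κ''_j < κ'_i; (iii) DᵀC = CᵀD; (iv) σ(r) := κ^{−1/2}(e^{κr}C + e^{−κr}D) is invertible for at least one r ≥ 0. Then there exists r₀ ≥ 0 such that σ(r) is invertible for all r ≥ r₀ and U(r) = σ'(r)σ(r)⁻¹ converges, as r → ∞, to the diagonal matrix with entries +κ'_i (i = 1,…,R) and −κ''_j (j = R+1,…,N). -/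

import Mathlib

open Matrix Filter

section helpers
variable {m p : Type*} [Fintype m] [Fintype p] [DecidableEq m] [DecidableEq p]

/-- A common right factor bringing `C` and `D` to normal form. -/
lemma sp_normal_form (C D : Matrix (m ⊕ p) (m ⊕ p) ℝ)
    (hM : IsUnit C.toBlocks₁₁)
    (hrank : C.toBlocks₂₂ = C.toBlocks₂₁ * (C.toBlocks₁₁)⁻¹ * C.toBlocks₁₂)
    (hsym : Dᵀ * C = Cᵀ * D)
    (a b : Matrix (m ⊕ p) (m ⊕ p) ℝ) (hu : IsUnit (a * C + b * D)) :
    ∃ (W : Matrix (m ⊕ p) (m ⊕ p) ℝ) (A : Matrix m m ℝ) (E : Matrix p m ℝ), IsUnit W ∧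
      C * W = fromBlocks 1 0 (C.toBlocks₂₁ * (C.toBlocks₁₁)⁻¹) 0 ∧
      D * W = fromBlocks A (-(C.toBlocks₂₁ * (C.toBlocks₁₁)⁻¹)ᵀ) E 1 := by
  set M := C.toBlocks₁₁ with hMdef
  set Q := C.toBlocks₂₁ * M⁻¹ with hQ
  have hdet : IsUnit M.det := (Matrix.isUnit_iff_isUnit_det _).1 hM
  have hC : C = fromBlocks M C.toBlocks₁₂ C.toBlocks₂₁ C.toBlocks₂₂ :=
    (fromBlocks_toBlocks C).symm
  let W₁ : Matrix (m ⊕ p) (m ⊕ p) ℝ := fromBlocks M⁻¹ (-(M⁻¹ * C.toBlocks₁₂)) 0 1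
  have hW₁ : IsUnit W₁ := by
    rw [Matrix.isUnit_iff_isUnit_det]
    simp only [W₁, det_fromBlocks_zero₂₁, det_one, mul_one]
    exact Matrix.isUnit_nonsing_inv_det _ hdet
  have hCW₁ : C * W₁ = fromBlocks 1 0 Q 0 := by
    conv_lhs => rw [hC]
    simp only [W₁, fromBlocks_multiply]
    congr 1
    · simp [Matrix.mul_nonsing_inv _ hdet]
    · simp [← Matrix.mul_assoc, Matrix.mul_nonsing_inv _ hdet]
    · simp [hQ]
    · rw [hrank]; simp [Matrix.mul_assoc, hQ]
  obtain ⟨A₁, B₁, E₁, F, hDW₁⟩ : ∃ A₁ B₁ E₁ F, D * W₁ = fromBlocks A₁ B₁ E₁ F :=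
    ⟨_, _, _, _, (fromBlocks_toBlocks _).symm⟩
  have hs : (D * W₁)ᵀ * (C * W₁) = (C * W₁)ᵀ * (D * W₁) := by
    calc (D * W₁)ᵀ * (C * W₁) = W₁ᵀ * (Dᵀ * C) * W₁ := by
          simp only [transpose_mul, Matrix.mul_assoc]
      _ = _ := by rw [hsym]; simp only [transpose_mul, Matrix.mul_assoc]
  have hB : B₁ = -(Qᵀ * F) := by
    rw [hCW₁, hDW₁] at hs
    simp only [fromBlocks_transpose, fromBlocks_multiply] at hs
    have h := congrArg toBlocks₁₂ hs
    simp at h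
    exact eq_neg_of_add_eq_zero_left h.symm
  have hF : IsUnit F.det := by
    rw [isUnit_iff_ne_zero]
    intro h0
    obtain ⟨v, hv0, hv⟩ := Matrix.exists_mulVec_eq_zero_iff.2 h0
    have hu' : IsUnit ((a * C + b * D) * W₁) := hu.mul hW₁
    have hz : ((a * C + b * D) * W₁) *ᵥ (Sum.elim 0 v) = 0 := by
      rw [Matrix.add_mul, Matrix.mul_assoc, Matrix.mul_assoc, hCW₁, hDW₁, Matrix.add_mulVec,
        ← Matrix.mulVec_mulVec, ← Matrix.mulVec_mulVec, fromBlocks_mulVec, fromBlocks_mulVec, hB]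
      have h1 : (Sum.elim (0 : m → ℝ) v) ∘ Sum.inl = 0 := by ext; simp
      have h2 : (Sum.elim (0 : m → ℝ) v) ∘ Sum.inr = v := by ext; simp
      have h3 : (-(Qᵀ * F)) *ᵥ v = 0 := by
        rw [Matrix.neg_mulVec, ← Matrix.mulVec_mulVec, hv]; simp
      have h4 : Sum.elim (0 : m → ℝ) (0 : p → ℝ) = 0 := by ext i; cases i <;> rfl
      simp [h1, h2, h3, hv, h4]
    have hinj := Matrix.mulVec_injective_iff_isUnit.2 hu'
    have := hinj (hz.trans (Matrix.mulVec_zero _).symm)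
    apply hv0
    ext j
    simpa using congrFun this (Sum.inr j)
  refine ⟨W₁ * fromBlocks 1 0 0 F⁻¹, A₁, E₁, hW₁.mul ?_, ?_, ?_⟩
  · rw [Matrix.isUnit_iff_isUnit_det]
    simp only [det_fromBlocks_zero₂₁, det_one, one_mul]
    exact Matrix.isUnit_nonsing_inv_det _ hF
  · rw [← Matrix.mul_assoc, hCW₁]; simp [fromBlocks_multiply]
  · rw [← Matrix.mul_assoc, hDW₁, hB]
    simp [fromBlocks_multiply, Matrix.mul_assoc, Matrix.mul_nonsing_inv _ hF]

lemma sp_exp_lim {c : ℝ} (hc : c < 0) : Tendsto (fun r : ℝ => Real.exp (c * r)) atTop (nhds 0) :=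
  Real.tendsto_exp_atBot.comp (tendsto_id.const_mul_atTop_of_neg hc)

/-- The normalized factorization solution converges. -/
lemma sp_limit (κ' : m → ℝ) (κ'' : p → ℝ) (hκ' : ∀ i, 0 < κ' i) (hκ'' : ∀ j, 0 < κ'' j)
    (Q : Matrix p m ℝ) (A : Matrix m m ℝ) (E : Matrix p m ℝ)
    (hQ : ∀ i j, Q j i = 0 ∨ κ'' j < κ' i) (ε : ℝ) :
    Tendsto (fun r : ℝ =>
      (diagonal (fun i => Real.exp (Sum.elim κ' κ'' i * r)) * fromBlocks 1 0 Q 0 +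
        ε • (diagonal (fun i => Real.exp (-(Sum.elim κ' κ'' i) * r)) * fromBlocks A (-Qᵀ) E 1)) *
        diagonal (fun i => Real.exp (Sum.elim (fun i => -κ' i) κ'' i * r))) atTop
      (nhds (diagonal (Sum.elim (fun _ : m => (1 : ℝ)) (fun _ : p => ε)))) := by
  have hq : ∀ i j, Tendsto (fun r : ℝ => Q j i * Real.exp ((κ'' j - κ' i) * r)) atTop (nhds 0) := by
    intro i j
    rcases hQ i j with h | h
    · simp [h]
    · simpa using (sp_exp_lim (sub_neg.2 h)).const_mul (Q j i)
  refine tendsto_pi_nhds.2 fun i => tendsto_pi_nhds.2 fun j => ?_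
  simp only [mul_diagonal, Matrix.add_apply, Matrix.smul_apply, diagonal_mul, smul_eq_mul]
  rcases i with i | i <;> rcases j with j | j
  · have h := ((sp_exp_lim (c := -κ' i - κ' j) (by linarith [hκ' i, hκ' j])).const_mul
      (ε * A i j)).const_add ((1 : Matrix m m ℝ) i j)
    rw [mul_zero, add_zero] at h
    convert h using 2 with r
    · simp only [Sum.elim_inl, fromBlocks_apply₁₁, add_mul]
      congr 1
      · by_cases hij : i = j
        · subst hij; simp [← Real.exp_add]
        · simp [Matrix.one_apply_ne hij]
      · rw [show (-κ' i - κ' j) * r = -κ' i * r + -κ' j * r by ring, Real.exp_add]; ring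
    · simp [diagonal_apply, one_apply]
  · have h := (hq i j).const_mul (-ε)
    rw [mul_zero] at h
    convert h using 2 with r
    · simp only [Sum.elim_inl, Sum.elim_inr, fromBlocks_apply₁₂, Matrix.neg_apply,
        Matrix.zero_apply, transpose_apply]
      rw [show (κ'' j - κ' i) * r = -κ' i * r + κ'' j * r by ring, Real.exp_add]; ring
    · simp
  · have h := (hq j i).add ((sp_exp_lim (c := -κ'' i - κ' j)
      (by linarith [hκ'' i, hκ' j])).const_mul (ε * E i j))
    rw [mul_zero, add_zero] at h
    convert h using 2 with r
    · simp only [Sum.elim_inl, Sum.elim_inr, fromBlocks_apply₂₁]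
      rw [show (κ'' i - κ' j) * r = κ'' i * r + -κ' j * r by ring, Real.exp_add,
        show (-κ'' i - κ' j) * r = -κ'' i * r + -κ' j * r by ring, Real.exp_add]; ring
    · simp
  · refine tendsto_const_nhds.congr fun r => ?_
    simp only [Sum.elim_inr, fromBlocks_apply₂₂, Matrix.zero_apply]
    by_cases hij : i = j
    · subst hij
      simp only [diagonal_apply_eq, Sum.elim_inr, one_apply_eq, mul_zero, zero_add, mul_one]
      rw [mul_assoc, ← Real.exp_add]; simp
    · simp [Matrix.one_apply_ne hij, hij]

end helpers

/-- Paper's main Theorem 2 (general form, zero initial potential): if `C` has rank `R`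
with invertible upper-left block `M = C₁₁` and `C₂₂ = C₂₁M⁻¹C₁₂`, if `Q₀ = C₂₁M⁻¹`
satisfies `(Q₀)_{ji} = 0` unless `κ''_j < κ'_i`, if `DᵀC = CᵀD`, and if
`σ(r) = κ^{-1/2}(e^{κr}C + e^{-κr}D)` is invertible for at least one `r ≥ 0`, then
`σ(r)` is eventually invertible and the superpotential `U(r) = σ'(r)σ(r)⁻¹` tends,
as `r → ∞`, to `diag(κ'_1,…,κ'_R,-κ''_{R+1},…,-κ''_N)`. -/
theorem superpotential_asymptotics_general
    (N R : ℕ) (hN : 0 < N) (hR : R ≤ N)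
    (κ' : Fin R → ℝ) (κ'' : Fin (N - R) → ℝ)
    (hκ' : ∀ i, 0 < κ' i) (hκ'' : ∀ j, 0 < κ'' j)
    (C D : Matrix (Fin R ⊕ Fin (N - R)) (Fin R ⊕ Fin (N - R)) ℝ)
    (hM : IsUnit C.toBlocks₁₁)
    (hrank : C.toBlocks₂₂ = C.toBlocks₂₁ * (C.toBlocks₁₁)⁻¹ * C.toBlocks₁₂)
    (hQ₀ : ∀ (i : Fin R) (j : Fin (N - R)),
      (C.toBlocks₂₁ * (C.toBlocks₁₁)⁻¹) j i = 0 ∨ κ'' j < κ' i)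
    (hsym : Dᵀ * C = Cᵀ * D) :
    let κv : Fin R ⊕ Fin (N - R) → ℝ := Sum.elim κ' κ''
    let σ : ℝ → Matrix (Fin R ⊕ Fin (N - R)) (Fin R ⊕ Fin (N - R)) ℝ := fun r =>
      diagonal (fun i => (Real.sqrt (κv i))⁻¹) *
        (diagonal (fun i => Real.exp (κv i * r)) * C +
          diagonal (fun i => Real.exp (-(κv i) * r)) * D)
    let σd : ℝ → Matrix (Fin R ⊕ Fin (N - R)) (Fin R ⊕ Fin (N - R)) ℝ := fun r =>
      Matrix.of fun i j => deriv (fun s => σ s i j) r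
    (∃ r : ℝ, 0 ≤ r ∧ IsUnit (σ r)) →
    ∃ r₀ : ℝ, 0 ≤ r₀ ∧ (∀ r, r₀ ≤ r → IsUnit (σ r)) ∧
      Tendsto (fun r => σd r * (σ r)⁻¹) atTop
        (nhds (diagonal (Sum.elim κ' fun j => -κ'' j))) := by
  intro κv σ σd hex
  have hκv : ∀ i, 0 < κv i := by rintro (i | i) <;> simp [κv, hκ', hκ'']
  obtain ⟨r₁, -, hr₁⟩ := hex
  have hu₁ : IsUnit (diagonal (fun i => Real.exp (κv i * r₁)) * C +
      diagonal (fun i => Real.exp (-(κv i) * r₁)) * D) := by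
    rw [Matrix.isUnit_iff_isUnit_det] at hr₁ ⊢
    simp only [σ] at hr₁
    rw [det_mul] at hr₁
    exact isUnit_of_mul_isUnit_right hr₁
  obtain ⟨W, A, E, hW, hCW, hDW⟩ := sp_normal_form C D hM hrank hsym _ _ hu₁
  have hσd : ∀ r, σd r = diagonal (fun i => Real.sqrt (κv i)) *
      (diagonal (fun i => Real.exp (κv i * r)) * C -
        diagonal (fun i => Real.exp (-(κv i) * r)) * D) := by
    intro r
    ext i j
    simp only [σd, σ, of_apply, diagonal_mul, Matrix.add_apply, Matrix.sub_apply]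
    have h1 : ∀ c : ℝ, HasDerivAt (fun s => Real.exp (c * s)) (Real.exp (c * r) * c) r := by
      intro c
      simpa using ((hasDerivAt_id r).const_mul c).exp
    have h2 := ((((h1 (κv i)).mul_const (C i j)).add
      ((h1 (-κv i)).mul_const (D i j))).const_mul ((Real.sqrt (κv i))⁻¹))
    refine h2.deriv.trans ?_
    have hs : (Real.sqrt (κv i))⁻¹ * κv i = Real.sqrt (κv i) := by
      have hp := Real.sqrt_pos.2 (hκv i)
      field_simp
      exact (Real.sq_sqrt (hκv i).le).symm
    linear_combination (Real.exp (κv i * r) * C i j - Real.exp (-κv i * r) * D i j) * hs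
  let G : ℝ → Matrix (Fin R ⊕ Fin (N - R)) (Fin R ⊕ Fin (N - R)) ℝ := fun r =>
    diagonal (fun i => Real.exp (Sum.elim (fun i => -κ' i) κ'' i * r))
  let s : Matrix (Fin R ⊕ Fin (N - R)) (Fin R ⊕ Fin (N - R)) ℝ :=
    diagonal (fun i => Real.sqrt (κv i))
  let t : Matrix (Fin R ⊕ Fin (N - R)) (Fin R ⊕ Fin (N - R)) ℝ :=
    diagonal (fun i => (Real.sqrt (κv i))⁻¹)
  have hst : s * t = 1 := by
    simp only [s, t, diagonal_mul_diagonal]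
    rw [← diagonal_one]
    congr 1; ext i
    exact mul_inv_cancel₀ (Real.sqrt_pos.2 (hκv i)).ne'
  have hts : t * s = 1 := mul_eq_one_comm.1 hst
  have hGu : ∀ r, IsUnit (G r) := by
    intro r
    rw [Matrix.isUnit_iff_isUnit_det, isUnit_iff_ne_zero, det_diagonal]
    exact Finset.prod_ne_zero_iff.2 fun i _ => (Real.exp_pos _).ne'
  let X : ℝ → ℝ → Matrix (Fin R ⊕ Fin (N - R)) (Fin R ⊕ Fin (N - R)) ℝ := fun ε r =>
    (diagonal (fun i => Real.exp (κv i * r)) * (C * W) +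
      ε • (diagonal (fun i => Real.exp (-(κv i) * r)) * (D * W))) * G r
  have hX : ∀ ε, Tendsto (X ε) atTop
      (nhds (diagonal (Sum.elim (fun _ => (1 : ℝ)) (fun _ => ε)))) := by
    intro ε
    simp only [X, hCW, hDW]
    exact sp_limit κ' κ'' hκ' hκ'' _ A E hQ₀ ε
  have hσX : ∀ r, σ r * (W * G r) = t * X 1 r := by
    intro r
    simp only [σ, X, t, one_smul]
    simp only [Matrix.mul_assoc, Matrix.add_mul]
  have hσdX : ∀ r, σd r * (W * G r) = s * X (-1) r := by
    intro r
    rw [hσd]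
    simp only [X, s, neg_smul, one_smul, ← sub_eq_add_neg]
    simp only [Matrix.mul_assoc, Matrix.sub_mul]
  have hX1 : Tendsto (X 1) atTop (nhds 1) := by
    have h := hX 1
    have h1 : (diagonal (Sum.elim (fun _ => (1 : ℝ)) (fun _ => 1)) :
        Matrix (Fin R ⊕ Fin (N - R)) (Fin R ⊕ Fin (N - R)) ℝ) = 1 := by
      rw [← diagonal_one]; congr 1; ext i; cases i <;> rfl
    rwa [h1] at h
  have hdet : Tendsto (fun r => (X 1 r).det) atTop (nhds 1) := by
    have h := ((continuous_id.matrix_det (R := ℝ)).tendsto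
      (1 : Matrix (Fin R ⊕ Fin (N - R)) (Fin R ⊕ Fin (N - R)) ℝ)).comp hX1
    simpa [Function.comp_def] using h
  have hinv : Tendsto (fun r => (X 1 r)⁻¹) atTop (nhds 1) := by
    have h := ((continuous_id.matrix_adjugate (R := ℝ)).tendsto
      (1 : Matrix (Fin R ⊕ Fin (N - R)) (Fin R ⊕ Fin (N - R)) ℝ)).comp hX1
    have h2 := (hdet.inv₀ one_ne_zero).smul h
    simpa [Function.comp_def, Matrix.inv_def] using h2
  have hev : ∀ᶠ r in atTop, IsUnit (X 1 r) := by
    filter_upwards [hdet.eventually_ne one_ne_zero] with r hr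
    rw [Matrix.isUnit_iff_isUnit_det]
    exact hr.isUnit
  have hWG : ∀ r, IsUnit (W * G r) := fun r => hW.mul (hGu r)
  have hσu : ∀ r, IsUnit (X 1 r) → IsUnit (σ r) := by
    intro r hr
    have h : IsUnit (σ r * (W * G r)) := by
      rw [hσX]
      exact (IsUnit.of_mul_eq_one _ hts).mul hr
    rw [Matrix.isUnit_iff_isUnit_det] at h ⊢
    rw [det_mul] at h
    exact isUnit_of_mul_isUnit_left h
  obtain ⟨r₀, hr₀⟩ := eventually_atTop.1 hev
  refine ⟨max r₀ 0, le_max_right _ _,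
    fun r hr => hσu r (hr₀ r ((le_max_left _ _).trans hr)), ?_⟩
  have hlim : Tendsto (fun r => s * X (-1) r * (X 1 r)⁻¹ * s) atTop
      (nhds (diagonal (Sum.elim κ' fun j => -κ'' j))) := by
    have h := (((tendsto_const_nhds (x := s)).mul (hX (-1))).mul hinv).mul
      (tendsto_const_nhds (x := s))
    convert h using 2
    simp only [s, mul_one, diagonal_mul_diagonal]
    congr 1; ext i
    have hi := Real.mul_self_sqrt (hκv i).le
    rcases i with i | i <;> simp [κv] at hi ⊢ <;> linarith
  refine hlim.congr' ?_
  filter_upwards [hev] with r hr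
  have hXd : IsUnit (X 1 r).det := (Matrix.isUnit_iff_isUnit_det _).1 hr
  have hσdet : IsUnit (σ r).det := (Matrix.isUnit_iff_isUnit_det _).1 (hσu r hr)
  have hinvσ : (σ r)⁻¹ = W * G r * (X 1 r)⁻¹ * s := by
    apply Matrix.inv_eq_right_inv
    rw [← Matrix.mul_assoc, ← Matrix.mul_assoc, hσX, Matrix.mul_assoc t,
      Matrix.mul_nonsing_inv _ hXd, Matrix.mul_one, hts]
  rw [hinvσ, ← hσdX]
  simp only [Matrix.mul_assoc]
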